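/- Let w be a double occurrence word on n ≥ 1 vertices and let t be any transition assignment. Let ι be the fixed-point-free involution of the darts given by ι(p,ε) = (p,−ε). Then ι∘τ_t∘ι = τ_t⁻¹, no orbit of τ_t on the set of darts is invariant under ι, and consequently the number of orbits of τ_t is even. -/

import Mathlib

/-!
The rules defining `τ` are symmetric under reversal of traversal: if `τ` sends `d` to `e`, it sends
`ι e` to `ι d`. Hence `ι ∘ τ ∘ ι = τ⁻¹` (`dartPerm_iota_apply`). Moreover `τ d ≠ ι d` for every
dart, since only `reverse` changes the sign of a dart and it also moves its position
(`dartPerm_ne_iota`).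

If `ι d = τ ^ k d`, then `ι (τ ^ j d) = τ ^ (k - j) d` for all `j`. With `j = ⌊k / 2⌋` this makes
`τ ^ j d` a dart `e` satisfying `ι e = e` or `ι e = τ e`, both impossible (`not_sameCycle_iota`).
So no orbit is `ι`-invariant, and `ι` induces a fixed-point-free involution on the set of orbits,
whose cardinality is therefore even.
-/

open scoped Classical

/-- The GF(2)-nullity of a square matrix: number of columns minus rank. -/
noncomputable def nullity {ι : Type*} [Fintype ι] (M : Matrix ι ι (ZMod 2)) : ℕ :=
  Fintype.card ι - M.rank

/-- The setoid on `α` whose classes are the orbits (cycles, including fixed points)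
of a permutation. -/
def sameCycleSetoid {α : Type*} (π : Equiv.Perm α) : Setoid α :=
  ⟨π.SameCycle, ⟨fun x => Equiv.Perm.SameCycle.refl π x, fun h => h.symm, fun h h' => h.trans h'⟩⟩

/-- The number of orbits of a permutation (fixed points count as orbits). -/
noncomputable def orbitCount {α : Type*} (π : Equiv.Perm α) : ℕ :=
  Nat.card (Quotient (sameCycleSetoid π))

/-- A double occurrence word on `n` vertices: a map from the `2n` cyclic positions to the
vertices in which every vertex occurs at exactly two positions. -/
def DoubleOccurrence {n : ℕ} (w : Fin (2 * n) → Fin n) : Prop :=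
  ∀ v : Fin n, (Finset.univ.filter fun p => w p = v).card = 2

/-- Distinct vertices `u` and `v` are interlaced in `w` when the two occurrences of `v` lie
in different cyclic arcs determined by the two occurrences of `u`; cutting the cycle at
position `0`, this says that exactly one occurrence of `v` lies strictly between the two
occurrences of `u`. -/
def Interlaced {n : ℕ} (w : Fin (2 * n) → Fin n) (u v : Fin n) : Prop :=
  u ≠ v ∧ ∀ p q : Fin (2 * n), p < q → w p = u → w q = u →
    (Finset.univ.filter fun r => p < r ∧ r < q ∧ w r = v).card = 1

/-- The interlace matrix of a double occurrence word: the `(u,v)` entry is `1` iff `u ≠ v`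
and `u`, `v` are interlaced; the diagonal entries are `0`. -/
noncomputable def interlaceMatrix {n : ℕ} (w : Fin (2 * n) → Fin n) :
    Matrix (Fin n) (Fin n) (ZMod 2) :=
  Matrix.of fun u v => if Interlaced w u v then 1 else 0

/-- A transition at a vertex: follow the word, cross it consistently with its orientation,
or reverse orientation. -/
inductive Transition : Type
  | follow : Transition
  | cross : Transition
  | reverse : Transition
deriving DecidableEq

/-- The matrix `I_t(w)`: delete the rows/columns of the vertices where `t` is `follow`,
and put diagonal entry `1` at the vertices where `t` is `reverse` (and `0` where `t` is
`cross`); off-diagonal entries record interlacement in `w`. -/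
noncomputable def transMatrix {n : ℕ} (w : Fin (2 * n) → Fin n) (t : Fin n → Transition) :
    Matrix {v : Fin n // t v ≠ Transition.follow} {v : Fin n // t v ≠ Transition.follow}
      (ZMod 2) :=
  Matrix.of fun u v =>
    if u = v then (if t u.1 = Transition.reverse then 1 else 0)
    else if Interlaced w u.1 v.1 then 1 else 0

/-- The position `1` in `Fin (2n)`, for `n ≥ 1`. -/
def pos1 {n : ℕ} (hn : 0 < n) : Fin (2 * n) := ⟨1, by omega⟩

/-- `τ` is the dart permutation determined by the transition assignment `t` on the double
occurrence word `w`: darts are pairs `(p, ε)` with `ε = true` the traversal of the edge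
`e_p` from `w(p)` to `w(p+1)` and `ε = false` its reverse, and for each vertex `v`
occurring at positions `a` and `b` the images of the four darts arriving at `v` are as
prescribed by `t v`. -/
def IsDartPerm {n : ℕ} (hn : 0 < n) (w : Fin (2 * n) → Fin n) (t : Fin n → Transition)
    (τ : Equiv.Perm (Fin (2 * n) × Bool)) : Prop :=
  ∀ (v : Fin n) (a b : Fin (2 * n)), a ≠ b → w a = v → w b = v →
    (t v = Transition.follow →
      τ (a - pos1 hn, true) = (a, true) ∧ τ (b - pos1 hn, true) = (b, true) ∧
      τ (a, false) = (a - pos1 hn, false) ∧ τ (b, false) = (b - pos1 hn, false)) ∧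
    (t v = Transition.cross →
      τ (a - pos1 hn, true) = (b, true) ∧ τ (b - pos1 hn, true) = (a, true) ∧
      τ (a, false) = (b - pos1 hn, false) ∧ τ (b, false) = (a - pos1 hn, false)) ∧
    (t v = Transition.reverse →
      τ (a - pos1 hn, true) = (b - pos1 hn, false) ∧ τ (b - pos1 hn, true) = (a - pos1 hn, false) ∧
      τ (a, false) = (b, true) ∧ τ (b, false) = (a, true))

/-- The fixed-point-free involution of the darts reversing the direction of traversal. -/
def iota {n : ℕ} : Fin (2 * n) × Bool → Fin (2 * n) × Bool := fun d => (d.1, !d.2)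

theorem iota_iota {n : ℕ} (d : Fin (2 * n) × Bool) : iota (iota d) = d := by
  simp [iota]

theorem iota_ne {n : ℕ} (d : Fin (2 * n) × Bool) : iota d ≠ d := by
  intro h
  simpa [iota] using congrArg Prod.snd h

theorem DoubleOccurrence.exists_partner {n : ℕ} {w : Fin (2 * n) → Fin n}
    (hw : DoubleOccurrence w) (a : Fin (2 * n)) : ∃ b, a ≠ b ∧ w b = w a := by
  have h : 1 < (Finset.univ.filter fun p => w p = w a).card := by rw [hw (w a)]; norm_num
  obtain ⟨b, hb, hba⟩ := Finset.exists_mem_ne h a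
  exact ⟨b, hba.symm, by simpa using hb⟩

/-- Every dart arrives at some occurrence `a` of a vertex: it is `(a - 1, +)` or `(a, -)`. -/
theorem dart_cases {n : ℕ} (hn : 0 < n) (d : Fin (2 * n) × Bool) :
    ∃ a, d = (a - pos1 hn, true) ∨ d = (a, false) := by
  have : NeZero (2 * n) := ⟨by omega⟩
  obtain ⟨p, _ | _⟩ := d
  · exact ⟨p, Or.inr rfl⟩
  · exact ⟨p + pos1 hn, Or.inl (by rw [add_sub_cancel_right])⟩

section

variable {n : ℕ} {hn : 0 < n} {w : Fin (2 * n) → Fin n} {t : Fin n → Transition}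
  {τ : Equiv.Perm (Fin (2 * n) × Bool)}

/-- The reversal symmetry of the transition rules, in the form `τ ∘ ι ∘ τ = ι`. -/
theorem dartPerm_iota_apply (hw : DoubleOccurrence w) (hτ : IsDartPerm hn w t τ)
    (d : Fin (2 * n) × Bool) : τ (iota (τ d)) = iota d := by
  obtain ⟨a, ha⟩ := dart_cases hn d
  obtain ⟨b, hab, hwb⟩ := hw.exists_partner a
  obtain ⟨hf, hc, hr⟩ := hτ (w a) a b hab rfl hwb
  cases ht : t (w a) with
  | follow =>
    obtain ⟨h1, h2, h3, h4⟩ := hf ht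
    rcases ha with rfl | rfl <;> simp [iota, h1, h3]
  | cross =>
    obtain ⟨h1, h2, h3, h4⟩ := hc ht
    rcases ha with rfl | rfl <;> simp [iota, h1, h2, h3, h4]
  | reverse =>
    obtain ⟨h1, h2, h3, h4⟩ := hr ht
    rcases ha with rfl | rfl <;> simp [iota, h1, h2, h3, h4]

theorem dartPerm_ne_iota (hw : DoubleOccurrence w) (hτ : IsDartPerm hn w t τ)
    (d : Fin (2 * n) × Bool) : τ d ≠ iota d := by
  have : NeZero (2 * n) := ⟨by omega⟩
  obtain ⟨a, ha⟩ := dart_cases hn d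
  obtain ⟨b, hab, hwb⟩ := hw.exists_partner a
  obtain ⟨hf, hc, hr⟩ := hτ (w a) a b hab rfl hwb
  cases ht : t (w a) with
  | follow =>
    obtain ⟨h1, h2, h3, h4⟩ := hf ht
    rcases ha with rfl | rfl <;> simp [iota, h1, h3]
  | cross =>
    obtain ⟨h1, h2, h3, h4⟩ := hc ht
    rcases ha with rfl | rfl <;> simp [iota, h1, h3]
  | reverse =>
    obtain ⟨h1, h2, h3, h4⟩ := hr ht
    rcases ha with rfl | rfl <;> simp [iota, h1, h3, hab.symm]

theorem iota_dartPerm_zpow (hw : DoubleOccurrence w) (hτ : IsDartPerm hn w t τ)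
    (j : ℤ) (d : Fin (2 * n) × Bool) : iota ((τ ^ j) d) = (τ ^ (-j)) (iota d) := by
  have hstep : ∀ e, iota (τ e) = τ⁻¹ (iota e) := fun e => by
    rw [Equiv.Perm.eq_inv_iff_eq, dartPerm_iota_apply hw hτ]
  have hstep' : ∀ e, iota (τ⁻¹ e) = τ (iota e) := fun e => by
    rw [← Equiv.Perm.inv_eq_iff_eq, ← hstep, ← Equiv.Perm.mul_apply, mul_inv_cancel, Equiv.Perm.one_apply]
  induction j with
  | zero => simp
  | succ i ih =>
    rw [add_comm, zpow_add, zpow_one, Equiv.Perm.mul_apply, hstep, ih, neg_add, zpow_add,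
      zpow_neg_one, Equiv.Perm.mul_apply]
  | pred i ih =>
    rw [sub_eq_add_neg, add_comm, zpow_add, zpow_neg_one, Equiv.Perm.mul_apply, hstep', ih,
      neg_add, neg_neg (1 : ℤ), zpow_add, zpow_one, Equiv.Perm.mul_apply]

theorem not_sameCycle_iota (hw : DoubleOccurrence w) (hτ : IsDartPerm hn w t τ)
    (d : Fin (2 * n) × Bool) : ¬ τ.SameCycle d (iota d) := by
  rintro ⟨k, hk⟩
  obtain ⟨j, rfl | rfl⟩ := Int.even_or_odd' k
  · apply iota_ne ((τ ^ j) d)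
    rw [iota_dartPerm_zpow hw hτ, ← hk, ← Equiv.Perm.mul_apply, ← zpow_add]
    congr 2
    ring
  · apply dartPerm_ne_iota hw hτ ((τ ^ j) d)
    rw [iota_dartPerm_zpow hw hτ, ← hk, ← Equiv.Perm.mul_apply, ← Equiv.Perm.mul_apply,
      ← zpow_add, ← zpow_one_add]
    congr 2
    ring

theorem sameCycle_iota (hw : DoubleOccurrence w) (hτ : IsDartPerm hn w t τ)
    {d e : Fin (2 * n) × Bool} (h : τ.SameCycle d e) : τ.SameCycle (iota d) (iota e) := by
  obtain ⟨k, rfl⟩ := h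
  exact ⟨-k, (iota_dartPerm_zpow hw hτ k d).symm⟩

end

/-- A finite type with a fixed-point-free involution has even cardinality. -/
theorem even_card_of_involutive {α : Type*} [Finite α] {f : α → α}
    (hf : Function.Involutive f) (hne : ∀ x, f x ≠ x) : Even (Nat.card α) := by
  have := Fintype.ofFinite α
  have hsupp : (hf.toPerm f).support = Finset.univ := by
    ext x
    simp [hne x]
  have h2 : 2 ∣ (hf.toPerm f).support.card :=
    Equiv.Perm.two_dvd_card_support (by ext x; simp [sq, hf x])
  rw [hsupp, Finset.card_univ, ← Nat.card_eq_fintype_card] at h2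
  exact even_iff_two_dvd.mpr h2

/-- For any transition assignment `t` on a double occurrence word `w` with dart
permutation `τ_t` and the direction-reversing involution `ι` of the darts:
`ι ∘ τ_t ∘ ι = τ_t⁻¹`, no orbit of `τ_t` is invariant under `ι`, and consequently
the number of orbits of `τ_t` is even. -/
theorem dartPerm_orbits_even {n : ℕ} (hn : 0 < n) (w : Fin (2 * n) → Fin n)
    (hw : DoubleOccurrence w) (t : Fin n → Transition)
    (τ : Equiv.Perm (Fin (2 * n) × Bool)) (hτ : IsDartPerm hn w t τ) :
    (∀ d : Fin (2 * n) × Bool, iota (τ (iota d)) = τ⁻¹ d) ∧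
      (∀ d : Fin (2 * n) × Bool,
        iota '' {x | τ.SameCycle d x} ≠ {x | τ.SameCycle d x}) ∧
      Even (orbitCount τ) := by
  refine ⟨fun d => ?_, fun d h => ?_, ?_⟩
  · rw [Equiv.Perm.eq_inv_iff_eq, dartPerm_iota_apply hw hτ, iota_iota]
  · have hd : iota d ∈ iota '' {x | τ.SameCycle d x} :=
      ⟨d, Equiv.Perm.SameCycle.refl τ d, rfl⟩
    rw [h] at hd
    exact not_sameCycle_iota hw hτ d hd
  · let f : Quotient (sameCycleSetoid τ) → Quotient (sameCycleSetoid τ) :=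
      Quotient.map iota fun _ _ h => sameCycle_iota hw hτ h
    refine even_card_of_involutive (f := f) ?_ ?_
    · rintro ⟨d⟩
      exact congrArg (Quotient.mk (sameCycleSetoid τ)) (iota_iota d)
    · rintro ⟨d⟩ h
      have hs : τ.SameCycle (iota d) d := Quotient.exact (s := sameCycleSetoid τ) h
      exact not_sameCycle_iota hw hτ d hs.symm
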